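/- The polynomial F(X,Y) = (X^q + X)(Y^q + Y) - c, where q is a power of a prime p, c is a nonzero element of an algebraically closed field K of characteristic p, is irreducible in K[X,Y]. -/

import Mathlib

open MvPolynomial

namespace Polynomial

variable {R : Type*} [CommRing R] [IsDomain R]

theorem isUnit_of_isUnit_reverse {f : R[X]} (h0 : f.coeff 0 ≠ 0) (h : IsUnit f.reverse) :
    IsUnit f := by
  have hdeg := f.natDegree_eq_reverse_natDegree_add_natTrailingDegree
  rw [natDegree_eq_zero_of_isUnit h, natTrailingDegree_eq_zero.2 (Or.inr h0)] at hdeg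
  rw [eq_C_of_natDegree_eq_zero hdeg, reverse_C] at h
  rwa [eq_C_of_natDegree_eq_zero hdeg]

theorem irreducible_of_irreducible_reverse {f : R[X]} (h0 : f.coeff 0 ≠ 0)
    (h : Irreducible f.reverse) : Irreducible f := by
  refine ⟨fun hf => h.not_isUnit ?_, fun a b hab => ?_⟩
  · have hfC := eq_C_of_natDegree_eq_zero (natDegree_eq_zero_of_isUnit hf)
    rwa [hfC, reverse_C, ← hfC]
  · rw [hab, mul_coeff_zero] at h0
    rw [hab, reverse_mul_of_domain] at h
    exact (h.isUnit_or_isUnit rfl).imp (isUnit_of_isUnit_reverse (left_ne_zero_of_mul h0))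
      (isUnit_of_isUnit_reverse (right_ne_zero_of_mul h0))

/-- Eisenstein's criterion with the roles of the leading and constant coefficients exchanged. -/
theorem irreducible_of_reverse_eisenstein {f : R[X]} {P : Ideal R} (hP : P.IsPrime)
    (h0 : IsUnit (f.coeff 0)) (hfP : ∀ n, n ≠ 0 → f.coeff n ∈ P) (hd : 0 < f.natDegree)
    (hl : f.leadingCoeff ∉ P ^ 2) : Irreducible f := by
  have htd : f.natTrailingDegree = 0 := natTrailingDegree_eq_zero.2 (Or.inr h0.ne_zero)
  have hdeg : f.reverse.natDegree = f.natDegree := by rw [reverse_natDegree, htd, Nat.sub_zero]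
  have hlead : f.reverse.leadingCoeff = f.coeff 0 := by
    rw [reverse_leadingCoeff, trailingCoeff, htd]
  refine irreducible_of_irreducible_reverse h0.ne_zero
    (irreducible_of_eisenstein_criterion hP ?_ (fun n hn => ?_) ?_ ?_ fun r hr => ?_)
  · rw [hlead]
    exact fun h => hP.ne_top (Ideal.eq_top_of_isUnit_mem _ h h0)
  · have hn' : n < f.natDegree := hdeg ▸ coe_lt_degree.1 hn
    rw [coeff_reverse, revAt_le hn'.le]
    exact hfP _ (Nat.sub_ne_zero_of_lt hn')
  · rwa [← natDegree_pos_iff_degree_pos, hdeg]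
  · rwa [coeff_zero_reverse]
  · refine isUnit_of_dvd_unit ?_ h0
    rw [← hlead]
    exact C_dvd_iff_dvd_coeff _ _ |>.1 hr _

theorem irreducible_X_pow_add_X_mul_C_sub_C {π a u : R} (hπ : Prime π) (ha : π ∣ a)
    (ha' : ¬ π ^ 2 ∣ a) (hu : IsUnit u) {q : ℕ} (hq : 2 ≤ q) :
    Irreducible ((X ^ q + X) * C a - C u) := by
  have ha0 : a ≠ 0 := fun h => ha' (h ▸ dvd_zero _)
  have hcoeff (n : ℕ) : ((X ^ q + X) * C a - C u).coeff n =
      ((if n = q then 1 else 0) + if 1 = n then 1 else 0) * a - if n = 0 then u else 0 := by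
    simp only [coeff_sub, coeff_mul_C, coeff_add, coeff_X_pow, coeff_X, coeff_C]
  have hdeg : ((X ^ q + X) * C a - C u).natDegree = q := by
    refine natDegree_eq_of_le_of_coeff_ne_zero (natDegree_le_iff_coeff_eq_zero.2 fun n hn => ?_) ?_
    · rw [hcoeff, if_neg (by lia), if_neg (by lia), if_neg (by lia)]
      simp
    · rw [hcoeff, if_pos rfl, if_neg (by lia), if_neg (by lia)]
      simpa
  refine irreducible_of_reverse_eisenstein ((Ideal.span_singleton_prime hπ.ne_zero).2 hπ)
    ?_ (fun n hn => ?_) (by lia) ?_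
  · rw [hcoeff, if_neg (by lia), if_neg (by lia), if_pos rfl]
    simpa
  · rw [hcoeff, if_neg hn, sub_zero, Ideal.mem_span_singleton]
    exact ha.mul_left _
  · rw [leadingCoeff, hdeg, hcoeff, if_pos rfl, if_neg (by lia), if_neg (by lia),
      Ideal.span_singleton_pow, Ideal.mem_span_singleton]
    simpa

end Polynomial

theorem Prime.not_sq_dvd_pow_add_self {R : Type*} [CommRing R] [IsDomain R] {π : R}
    (hπ : Prime π) {q : ℕ} (hq : 2 ≤ q) : ¬ π ^ 2 ∣ π ^ q + π := by
  rw [dvd_add_right (pow_dvd_pow π hq)]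
  intro h
  exact absurd ((pow_dvd_pow_iff hπ.ne_zero hπ.not_isUnit).1 (by simpa using h : π ^ 2 ∣ π ^ 1))
    (by norm_num)

theorem stmt_0 (K : Type*) [Field K] [IsAlgClosed K] (p : ℕ) [Fact p.Prime]
    [CharP K p] (n : ℕ) (hn : 1 ≤ n) (q : ℕ) (hq : q = p ^ n) (c : K) (hc : c ≠ 0) :
    Irreducible (((X 0 : MvPolynomial (Fin 2) K) ^ q + X 0) * ((X 1) ^ q + X 1) - C c) := by
  have hq2 : 2 ≤ q := hq ▸ (Fact.out : p.Prime).two_le.trans (Nat.le_self_pow (by lia) p)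
  have hX : Prime (X 0 : MvPolynomial (Fin 1) K) := X_prime
  rw [← MulEquiv.irreducible_iff (finSuccEquiv K 1)]
  have h1 : finSuccEquiv K 1 (X 1) = Polynomial.C (X 0) := finSuccEquiv_X_succ (j := 0)
  have hC : finSuccEquiv K 1 (C c) = Polynomial.C (C c) := by
    simp [finSuccEquiv_apply]
  simp only [map_sub, map_mul, map_add, map_pow, finSuccEquiv_X_zero, h1, hC]
  simpa using Polynomial.irreducible_X_pow_add_X_mul_C_sub_C hX
    (dvd_add (dvd_pow_self _ (by lia)) dvd_rfl) (hX.not_sq_dvd_pow_add_self hq2)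
    ((isUnit_iff_ne_zero.2 hc).map C) hq2
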